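/- Let q be a complex-valued quadratic form on ℝ^{2n} with Re q(X) ≤ 0 for all X ∈ ℝ^{2n}, with Hamilton map F and singular space S, and assume q is elliptic on S (X ∈ S and q(X) = 0 imply X = 0). Then for every real eigenvalue λ of F, the subspace S_λ = (Ker(F − λ) ⊕ Ker(F + λ)) ∩ ℝ^{2n} is symplectic: the restriction of σ to S_λ is nondegenerate. -/

import Mathlib

open Matrix

/-- The canonical symplectic form `σ((x,ξ),(y,η)) = ξ·y − x·η` on `R^{n+n}`,
where the first `n` coordinates are `x` and the last `n` coordinates are `ξ`.
Over `R = ℂ` this is the ℂ-bilinear extension of the real canonical symplectic form. -/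
def symp {R : Type*} [CommRing R] {n : ℕ} (X Y : Fin (n + n) → R) : R :=
  ∑ i : Fin n, (X (Fin.natAdd n i) * Y (Fin.castAdd n i)
    - X (Fin.castAdd n i) * Y (Fin.natAdd n i))

/-- The canonical inclusion `ℝ^{2n} ⊆ ℂ^{2n}`. -/
def cx {n : ℕ} (X : Fin (n + n) → ℝ) : Fin (n + n) → ℂ := fun i => (X i : ℂ)

/-- The real part of a complex matrix. -/
def ReM {n : ℕ} (F : Matrix (Fin (n + n)) (Fin (n + n)) ℂ) :
    Matrix (Fin (n + n)) (Fin (n + n)) ℝ := F.map Complex.re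

/-- The imaginary part of a complex matrix. -/
def ImM {n : ℕ} (F : Matrix (Fin (n + n)) (Fin (n + n)) ℂ) :
    Matrix (Fin (n + n)) (Fin (n + n)) ℝ := F.map Complex.im

/-- The singular space `S = (⋂_{j=0}^{2n−1} Ker[Re F ∘ (Im F)^j]) ∩ ℝ^{2n}`
associated to a quadratic form with Hamilton map `F`. -/
def singularSpace {n : ℕ} (F : Matrix (Fin (n + n)) (Fin (n + n)) ℂ) :
    Set (Fin (n + n) → ℝ) :=
  {X | ∀ j < n + n, (ReM F * ImM F ^ j).mulVec X = 0}

/-- The space `S_λ = (Ker(F − λ) ⊕ Ker(F + λ)) ∩ ℝ^{2n}`: real vectors which are the sum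
of an eigenvector (or zero) of `F` for the eigenvalue `λ` and one for `−λ`. -/
def Slam {n : ℕ} (F : Matrix (Fin (n + n)) (Fin (n + n)) ℂ) (l : ℝ) :
    Set (Fin (n + n) → ℝ) :=
  {X | ∃ u v : Fin (n + n) → ℂ, F.mulVec u = (l : ℂ) • u ∧
    F.mulVec v = (-(l : ℂ)) • v ∧ cx X = u + v}

section Aux

variable {n : ℕ}

lemma symp_add_right' (X Y Z : Fin (n + n) → ℝ) : symp X (Y + Z) = symp X Y + symp X Z := by
  simp only [symp, Pi.add_apply, ← Finset.sum_add_distrib]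
  exact Finset.sum_congr rfl fun i _ => by ring

lemma symp_smul_right' (c : ℝ) (X Y : Fin (n + n) → ℝ) : symp X (c • Y) = c * symp X Y := by
  simp only [symp, Pi.smul_apply, smul_eq_mul, Finset.mul_sum]
  exact Finset.sum_congr rfl fun i _ => by ring

lemma symp_swap' (X Y : Fin (n + n) → ℝ) : symp X Y = - symp Y X := by
  simp only [symp, ← Finset.sum_neg_distrib]
  exact Finset.sum_congr rfl fun i _ => by ring

lemma symp_cx_re (X : Fin (n + n) → ℝ) (w : Fin (n + n) → ℂ) :
    (symp (cx X) w).re = symp X (fun i => (w i).re) := by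
  simp [symp, cx]

lemma symp_cx_im (X : Fin (n + n) → ℝ) (w : Fin (n + n) → ℂ) :
    (symp (cx X) w).im = symp X (fun i => (w i).im) := by
  simp [symp, cx]

lemma symp_nondeg' (Z : Fin (n + n) → ℝ) (h : ∀ Y, symp Y Z = 0) : Z = 0 := by
  have hc : ∀ i : Fin n, Z (Fin.castAdd n i) = 0 := by
    intro i
    have := h (Fin.append 0 (Pi.single i 1))
    simp only [symp, Fin.append_left, Fin.append_right] at this
    simpa [Pi.single_apply, -Fin.natAdd_eq_addNat] using this
  have hd : ∀ i : Fin n, Z (Fin.natAdd n i) = 0 := by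
    intro i
    have := h (Fin.append (Pi.single i 1) 0)
    simp only [symp, Fin.append_left, Fin.append_right] at this
    simpa [Pi.single_apply, -Fin.natAdd_eq_addNat] using this
  funext i
  exact Fin.addCases (motive := fun i => Z i = 0) hc hd i

lemma mulVec_re' (F : Matrix (Fin (n + n)) (Fin (n + n)) ℂ) (u : Fin (n + n) → ℂ) :
    (fun i => (F.mulVec u i).re) =
      (ReM F).mulVec (fun i => (u i).re) - (ImM F).mulVec (fun i => (u i).im) := by
  funext i
  simp [Matrix.mulVec, dotProduct, ReM, ImM, Finset.sum_sub_distrib]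

lemma mulVec_im' (F : Matrix (Fin (n + n)) (Fin (n + n)) ℂ) (u : Fin (n + n) → ℂ) :
    (fun i => (F.mulVec u i).im) =
      (ReM F).mulVec (fun i => (u i).im) + (ImM F).mulVec (fun i => (u i).re) := by
  funext i
  simp [Matrix.mulVec, dotProduct, ReM, ImM, Finset.sum_add_distrib]

lemma cx_re' (X : Fin (n + n) → ℝ) : (fun i => (cx X i).re) = X := by
  funext i; simp [cx]

lemma cx_im' (X : Fin (n + n) → ℝ) : (fun i => (cx X i).im) = 0 := by
  funext i; simp [cx]

lemma symp_F_re (F : Matrix (Fin (n + n)) (Fin (n + n)) ℂ) (X Y : Fin (n + n) → ℝ) :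
    (symp (cx X) (F.mulVec (cx Y))).re = symp X ((ReM F).mulVec Y) := by
  rw [symp_cx_re, mulVec_re', cx_re', cx_im']; simp

lemma symp_F_im (F : Matrix (Fin (n + n)) (Fin (n + n)) ℂ) (X Y : Fin (n + n) → ℝ) :
    (symp (cx X) (F.mulVec (cx Y))).im = symp X ((ImM F).mulVec Y) := by
  rw [symp_cx_im, mulVec_im', cx_re', cx_im']; simp

lemma symp_swapC (X Y : Fin (n + n) → ℂ) : symp X Y = - symp Y X := by
  simp only [symp, ← Finset.sum_neg_distrib]
  exact Finset.sum_congr rfl fun i _ => by ring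

variable (F : Matrix (Fin (n + n)) (Fin (n + n)) ℂ)

lemma symC (hskew : ∀ X Y : Fin (n + n) → ℂ, symp (F.mulVec X) Y = -symp X (F.mulVec Y))
    (X Y : Fin (n + n) → ℂ) : symp X (F.mulVec Y) = symp Y (F.mulVec X) := by
  rw [symp_swapC Y, hskew, neg_neg]

lemma ker_of_re_zero
    (hskew : ∀ X Y : Fin (n + n) → ℂ, symp (F.mulVec X) Y = -symp X (F.mulVec Y))
    (hre : ∀ X : Fin (n + n) → ℝ, symp X ((ReM F).mulVec X) ≤ 0)
    (a : Fin (n + n) → ℝ) (ha : symp a ((ReM F).mulVec a) = 0) : (ReM F).mulVec a = 0 := by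
  apply symp_nondeg'
  intro Y
  have hs : symp a ((ReM F).mulVec Y) = symp Y ((ReM F).mulVec a) := by
    rw [← symp_F_re, ← symp_F_re, symC F hskew]
  have hl : ∀ (Z : Fin (n + n) → ℝ) (t : ℝ), symp (a + t • Y) Z = symp a Z + t * symp Y Z := by
    intro Z t
    rw [symp_swap', symp_add_right', symp_smul_right', symp_swap' Z a, symp_swap' Z Y]; ring
  have key : ∀ t : ℝ, 2 * t * symp Y ((ReM F).mulVec a) + t ^ 2 * symp Y ((ReM F).mulVec Y) ≤ 0 := by
    intro t
    have := hre (a + t • Y)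
    rw [Matrix.mulVec_add, Matrix.mulVec_smul, symp_add_right', symp_smul_right', hl, hl, ha, hs]
      at this
    linarith
  generalize symp Y ((ReM F).mulVec a) = p at key
  generalize symp Y ((ReM F).mulVec Y) = r at key
  by_contra hp
  have h1 := key (p / (1 + |r|))
  have hpos : 0 < 1 + |r| := by positivity
  have h2 : 2 * (p / (1 + |r|)) * p + (p / (1 + |r|)) ^ 2 * r
      = p ^ 2 * (2 * (1 + |r|) + r) / (1 + |r|) ^ 2 := by
    field_simp
  rw [h2] at h1
  have h3 : 0 < p ^ 2 := by positivity
  have h4 : 0 < 2 * (1 + |r|) + r := by linarith [neg_abs_le r, abs_nonneg r]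
  have : 0 < p ^ 2 * (2 * (1 + |r|) + r) / (1 + |r|) ^ 2 := by positivity
  linarith

lemma ker_of_eig
    (hskew : ∀ X Y : Fin (n + n) → ℂ, symp (F.mulVec X) Y = -symp X (F.mulVec Y))
    (hre : ∀ X : Fin (n + n) → ℝ, symp X ((ReM F).mulVec X) ≤ 0)
    (l : ℝ) (u : Fin (n + n) → ℂ) (hu : F.mulVec u = (l : ℂ) • u) :
    (ReM F).mulVec (fun i => (u i).re) = 0 := by
  have h1 := mulVec_re' F u
  have h2 := mulVec_im' F u
  rw [hu] at h1 h2
  have e1 : (fun i => (((l : ℂ) • u) i).re) = l • (fun i => (u i).re) := by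
    funext i; simp
  have e2 : (fun i => (((l : ℂ) • u) i).im) = l • (fun i => (u i).im) := by
    funext i; simp
  rw [e1] at h1
  rw [e2] at h2
  apply ker_of_re_zero F hskew hre
  generalize (fun i => (u i).re) = a at *
  generalize (fun i => (u i).im) = b at *
  have hM : symp a ((ImM F).mulVec b) = symp b ((ImM F).mulVec a) := by
    rw [← symp_F_im, ← symp_F_im, symC F hskew]
  have k1 : symp a ((ReM F).mulVec a) = l * symp a a + symp a ((ImM F).mulVec b) := by
    rw [← symp_smul_right', h1, ← symp_add_right', sub_add_cancel]
  have k2 : l * symp b b = symp b ((ReM F).mulVec b) + symp b ((ImM F).mulVec a) := by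
    rw [← symp_smul_right', h2, symp_add_right']
  have ha : symp a a = 0 := by linarith [symp_swap' a a]
  have hb : symp b b = 0 := by linarith [symp_swap' b b]
  rw [ha] at k1
  rw [hb] at k2
  linarith [hre a, hre b]

lemma Slam_ker
    (hskew : ∀ X Y : Fin (n + n) → ℂ, symp (F.mulVec X) Y = -symp X (F.mulVec Y))
    (hre : ∀ X : Fin (n + n) → ℝ, symp X ((ReM F).mulVec X) ≤ 0)
    (l : ℝ) (X : Fin (n + n) → ℝ) (hX : X ∈ Slam F l) : (ReM F).mulVec X = 0 := by
  obtain ⟨u, v, hu, hv, h⟩ := hX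
  have h1 := ker_of_eig F hskew hre l u hu
  have h2 := ker_of_eig F hskew hre (-l) v (by rw [hv]; simp)
  have : X = (fun i => (u i).re) + (fun i => (v i).re) := by
    rw [← cx_re' X, h]; funext i; simp
  rw [this, Matrix.mulVec_add, h1, h2, add_zero]

lemma Slam_im
    (hskew : ∀ X Y : Fin (n + n) → ℂ, symp (F.mulVec X) Y = -symp X (F.mulVec Y))
    (hre : ∀ X : Fin (n + n) → ℝ, symp X ((ReM F).mulVec X) ≤ 0)
    (l : ℝ) (X : Fin (n + n) → ℝ) (hX : X ∈ Slam F l) : (ImM F).mulVec X ∈ Slam F l := by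
  have h0 := Slam_ker F hskew hre l X hX
  obtain ⟨u, v, hu, hv, h⟩ := hX
  refine ⟨(-Complex.I) • F.mulVec u, (-Complex.I) • F.mulVec v, ?_, ?_, ?_⟩
  · rw [Matrix.mulVec_smul, hu, Matrix.mulVec_smul, hu, smul_comm]
  · rw [Matrix.mulVec_smul, hv, Matrix.mulVec_smul, hv, smul_comm]
  · rw [← smul_add, ← Matrix.mulVec_add, ← h]
    have h1 := mulVec_re' F (cx X)
    have h2 := mulVec_im' F (cx X)
    rw [cx_re', cx_im', h0] at h1
    rw [cx_re', cx_im'] at h2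
    funext i
    have h1 := congrFun h1 i
    have h2 := congrFun h2 i
    simp at h1 h2
    apply Complex.ext
    · simp [cx, h2]
    · simp [cx, h1]

end Aux

/-- Let `q` be a complex-valued quadratic form on `ℝ^{2n}` with
`Re q ≤ 0`, Hamilton map `F` and singular space `S`, and assume `q` is elliptic on
`S`. Then for every real eigenvalue `λ` of `F`, the subspace
`S_λ = (Ker(F − λ) ⊕ Ker(F + λ)) ∩ ℝ^{2n}` is symplectic: the restriction of `σ`
to `S_λ` is nondegenerate. -/
theorem Slam_symplectic_of_elliptic_on_singularSpace
    (n : ℕ) (hn : 1 ≤ n)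
    (q : (Fin (n + n) → ℂ) → ℂ)
    (F : Matrix (Fin (n + n)) (Fin (n + n)) ℂ)
    (hq : ∀ X : Fin (n + n) → ℂ, q X = symp X (F.mulVec X))
    (hskew : ∀ X Y : Fin (n + n) → ℂ, symp (F.mulVec X) Y = -symp X (F.mulVec Y))
    (hre : ∀ X : Fin (n + n) → ℝ, (q (cx X)).re ≤ 0)
    (hell : ∀ X ∈ singularSpace F, q (cx X) = 0 → X = 0)
    (l : ℝ) (hl : ∃ v : Fin (n + n) → ℂ, v ≠ 0 ∧ F.mulVec v = (l : ℂ) • v) :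
    ∀ X ∈ Slam F l, (∀ Y ∈ Slam F l, symp X Y = 0) → X = 0 := by
  have hre' : ∀ X : Fin (n + n) → ℝ, symp X ((ReM F).mulVec X) ≤ 0 := by
    intro X
    rw [← symp_F_re, ← hq]
    exact hre X
  intro X hX hXY
  have hpow : ∀ j : ℕ, (ImM F ^ j).mulVec X ∈ Slam F l := by
    intro j
    induction j with
    | zero => simpa using hX
    | succ k ih =>
      rw [pow_succ', ← Matrix.mulVec_mulVec]
      exact Slam_im F hskew hre' l _ ih
  apply hell X
  · intro j _
    rw [← Matrix.mulVec_mulVec]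
    exact Slam_ker F hskew hre' l _ (hpow j)
  · rw [hq]
    apply Complex.ext
    · rw [symp_F_re, Slam_ker F hskew hre' l X hX]
      simp [symp]
    · rw [symp_F_im, hXY _ (Slam_im F hskew hre' l X hX)]
      simp
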